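/- Let H be a graph with k ≥ 1 edges and maximum degree Δ whose chromatic index χ′(H) (the minimum number of colors in a proper edge coloring of H) equals Δ. Then AR_s(H) ≥ k(k+1)/(2Δ). -/

import Mathlib

open SimpleGraph

/-- A proper edge coloring of `G`: adjacent (distinct, vertex-sharing) edges get
different colors. -/
def IsProperEdgeColoring {V : Type*} (G : SimpleGraph V) (c : Sym2 V → ℕ) : Prop :=
  ∀ e₁ ∈ G.edgeSet, ∀ e₂ ∈ G.edgeSet, e₁ ≠ e₂ → (∃ v, v ∈ e₁ ∧ v ∈ e₂) → c e₁ ≠ c e₂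

/-- `G` contains a rainbow copy of `H` with respect to the edge coloring `c`:
there is an injective graph homomorphism `H → G` whose image edges receive
pairwise distinct colors. -/
def HasRainbowCopy {V W : Type*} (G : SimpleGraph V) (H : SimpleGraph W) (c : Sym2 V → ℕ) : Prop :=
  ∃ f : H →g G, Function.Injective f ∧
    ∀ e₁ ∈ H.edgeSet, ∀ e₂ ∈ H.edgeSet, c (Sym2.map f e₁) = c (Sym2.map f e₂) → e₁ = e₂

/-- `G → H`: every proper edge coloring of `G` contains a rainbow copy of `H`. -/
def ArrowsTo {V W : Type*} (G : SimpleGraph V) (H : SimpleGraph W) : Prop :=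
  ∀ c : Sym2 V → ℕ, IsProperEdgeColoring G c → HasRainbowCopy G H c

/-- The size anti-Ramsey number: the minimum number of edges of a (finite) graph
`G` with `G → H`. -/
noncomputable def ARs {W : Type*} (H : SimpleGraph W) : ℕ :=
  sInf {m | ∃ (n : ℕ) (G : SimpleGraph (Fin n)), ArrowsTo G H ∧ G.edgeSet.ncard = m}

/-- The local anti-Ramsey number: the minimum `n` such that `K_n → H`. -/
noncomputable def ARloc {W : Type*} (H : SimpleGraph W) : ℕ :=
  sInf {n | ArrowsTo (⊤ : SimpleGraph (Fin n)) H}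

/-- The chromatic index of `H`: the minimum number of colors in a proper edge
coloring of `H`. -/
noncomputable def chromIndex {W : Type*} (H : SimpleGraph W) : ℕ :=
  sInf {m | ∃ c : Sym2 W → ℕ, IsProperEdgeColoring H c ∧ ∀ e ∈ H.edgeSet, c e < m}

/-!
Suppose `G → H`, where `H` has `k` edges and is edge-colored with `m` colors. Color greedily `i`
disjoint matchings of `G` with the colors `0, …, i - 1`, and all remaining edges with distinct
colors above these. A rainbow copy of `H` meets the matchings in at most `i` edges, so one of the
`m` color classes of the copy contains at least `(k - i) / m` edges outside them, and these form
the next matching. After `k` rounds the matchings have at least `∑ i < k, (k - i) / m` edges.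
-/

section EdgeColorable

variable {V W : Type*} {F G M : SimpleGraph V} {c d : Sym2 V → ℕ} {m n : ℕ}

/-- `G` has a proper edge coloring with colors `0, …, n - 1`. The chromatic index of `G` is the
least such `n`, and `n = 1` says that the edges of `G` form a matching. -/
def EdgeColorable (G : SimpleGraph V) (n : ℕ) : Prop :=
  ∃ c : Sym2 V → ℕ, IsProperEdgeColoring G c ∧ ∀ e ∈ G.edgeSet, c e < n

lemma isProperEdgeColoring_of_injOn (hc : Set.InjOn c G.edgeSet) : IsProperEdgeColoring G c :=
  fun _ h₁ _ h₂ hne _ h ↦ hne (hc h₁ h₂ h)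

lemma IsProperEdgeColoring.mono (hFG : F ≤ G) (hc : IsProperEdgeColoring G c) :
    IsProperEdgeColoring F c :=
  fun e₁ h₁ e₂ h₂ ↦ hc e₁ (edgeSet_mono hFG h₁) e₂ (edgeSet_mono hFG h₂)

lemma IsProperEdgeColoring.injOn_neighborSet (hc : IsProperEdgeColoring G c) (v : V) :
    Set.InjOn (fun w ↦ c s(v, w)) (G.neighborSet v) := by
  intro x hx y hy hxy
  by_contra hne
  exact hc s(v, x) hx s(v, y) hy (fun h ↦ hne (Sym2.congr_right.1 h))
    ⟨v, Sym2.mem_mk_left v x, Sym2.mem_mk_left v y⟩ hxy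

lemma IsProperEdgeColoring.piecewise [DecidablePred (· ∈ F.edgeSet)]
    (hc : IsProperEdgeColoring F c) (hcn : ∀ e ∈ F.edgeSet, c e < n)
    (hd : IsProperEdgeColoring (G \ F) d) :
    IsProperEdgeColoring G (F.edgeSet.piecewise c (fun e ↦ n + d e)) := by
  intro e₁ h₁ e₂ h₂ hne hv
  by_cases hF₁ : e₁ ∈ F.edgeSet <;> by_cases hF₂ : e₂ ∈ F.edgeSet <;>
    simp only [Set.piecewise, hF₁, hF₂, if_true, if_false]
  · exact hc e₁ hF₁ e₂ hF₂ hne hv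
  · have := hcn e₁ hF₁
    omega
  · have := hcn e₂ hF₂
    omega
  · have := hd e₁ (by simp [h₁, hF₁]) e₂ (by simp [h₂, hF₂]) hne hv
    omega

lemma exists_edgeColorable (hG : G.edgeSet.Finite) : ∃ n, EdgeColorable G n := by
  obtain ⟨c, hc⟩ := Set.countable_iff_exists_injOn.1 hG.countable
  obtain ⟨b, hb⟩ := (hG.image c).bddAbove
  exact ⟨b + 1, c, isProperEdgeColoring_of_injOn hc,
    fun e he ↦ Nat.lt_succ_of_le (hb (Set.mem_image_of_mem c he))⟩

lemma edgeColorable_chromIndex (hG : G.edgeSet.Finite) : EdgeColorable G (chromIndex G) :=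
  Nat.sInf_mem (exists_edgeColorable hG)

lemma EdgeColorable.mono (hFG : F ≤ G) (hG : EdgeColorable G n) : EdgeColorable F n := by
  obtain ⟨c, hc, hcn⟩ := hG
  exact ⟨c, hc.mono hFG, fun e he ↦ hcn e (edgeSet_mono hFG he)⟩

lemma EdgeColorable.map (hG : EdgeColorable G n) (f : V ↪ W) : EdgeColorable (G.map f) n := by
  obtain ⟨c, hc, hcn⟩ := hG
  have hval (e : Sym2 V) : Function.extend (Sym2.map f) c 0 (e.map f) = c e :=
    (Sym2.map.injective f.injective).extend_apply c 0 e
  refine ⟨Function.extend (Sym2.map f) c 0, ?_, ?_⟩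
  · simp only [IsProperEdgeColoring, edgeSet_map]
    rintro _ ⟨e₁, h₁, rfl⟩ _ ⟨e₂, h₂, rfl⟩ hne ⟨_, hv₁, hv₂⟩
    obtain ⟨v, hv, rfl⟩ := Sym2.mem_map.1 hv₁
    obtain ⟨w, hw, hwv⟩ := Sym2.mem_map.1 hv₂
    obtain rfl := f.injective hwv
    simpa only [Function.Embedding.sym2Map_apply, hval] using
      hc e₁ h₁ e₂ h₂ (fun h ↦ hne (congrArg _ h)) ⟨w, hv, hw⟩
  · simp only [edgeSet_map]
    rintro _ ⟨e, he, rfl⟩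
    simpa only [Function.Embedding.sym2Map_apply, hval] using hcn e he

lemma EdgeColorable.sup (hF : EdgeColorable F m) (hM : EdgeColorable M n) :
    EdgeColorable (F ⊔ M) (m + n) := by
  classical
  obtain ⟨c, hc, hcm⟩ := hF
  obtain ⟨d, hd, hdn⟩ := hM
  have hdiff : (F ⊔ M) \ F ≤ M := by simp
  refine ⟨F.edgeSet.piecewise c (fun e ↦ m + d e), hc.piecewise hcm (hd.mono hdiff), ?_⟩
  intro e he
  by_cases heF : e ∈ F.edgeSet
  · simpa [heF] using Nat.lt_add_right n (hcm e heF)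
  · have heM : e ∈ M.edgeSet := by simpa [heF] using he
    simpa [heF] using hdn e heM

lemma IsProperEdgeColoring.edgeColorable_one_of_eqOn (hc : IsProperEdgeColoring G c) (hMG : M ≤ G)
    {a : ℕ} (ha : ∀ e ∈ M.edgeSet, c e = a) : EdgeColorable M 1 :=
  ⟨0, fun e₁ h₁ e₂ h₂ hne hv ↦
    absurd ((ha e₁ h₁).trans (ha e₂ h₂).symm) (hc.mono hMG e₁ h₁ e₂ h₂ hne hv), by simp⟩

lemma EdgeColorable.exists_large_matching (hG : EdgeColorable G n) (hfin : G.edgeSet.Finite) :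
    ∃ M ≤ G, EdgeColorable M 1 ∧ G.edgeSet.ncard ≤ n * M.edgeSet.ncard := by
  obtain ⟨c, hc, hcn⟩ := hG
  let colorClass (a : ℕ) : SimpleGraph V := fromEdgeSet {e ∈ G.edgeSet | c e = a}
  have hclass (a : ℕ) : (colorClass a).edgeSet = {e ∈ G.edgeSet | c e = a} := by
    simp only [colorClass, edgeSet_fromEdgeSet]
    exact (Set.disjoint_left.2 fun e he ↦ G.not_isDiag_of_mem_edgeSet he.1).sdiff_eq_left
  have hle (a : ℕ) : colorClass a ≤ G := by
    simp [← edgeSet_subset_edgeSet, hclass]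
  have hsum : G.edgeSet.ncard = ∑ a ∈ Finset.range n, (colorClass a).edgeSet.ncard := by
    rw [Set.ncard_eq_toFinset_card _ hfin, Finset.card_eq_sum_card_fiberwise (f := c)
      (t := Finset.range n) (by simpa [Set.MapsTo] using hcn)]
    refine Finset.sum_congr rfl fun a _ ↦ ?_
    rw [hclass, ← Set.ncard_coe_finset]
    simp
  suffices ∃ a, G.edgeSet.ncard ≤ n * (colorClass a).edgeSet.ncard by
    obtain ⟨a, ha⟩ := this
    exact ⟨colorClass a, hle a, hc.edgeColorable_one_of_eqOn (hle a) (a := a)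
      (fun e he ↦ ((hclass a).subset he).2), ha⟩
  rcases Nat.eq_zero_or_pos n with rfl | hn
  · exact ⟨0, by simp [hsum]⟩
  · obtain ⟨a, -, ha⟩ := Finset.exists_le_of_sum_le (s := Finset.range n)
      (f := fun _ ↦ G.edgeSet.ncard) (g := fun a ↦ n * (colorClass a).edgeSet.ncard)
      (Finset.nonempty_range_iff.2 hn.ne')
      (by simp [← Finset.mul_sum, ← hsum])
    exact ⟨a, ha⟩

end EdgeColorable

section LowerBound

variable {V W : Type*} {F G : SimpleGraph V} {H : SimpleGraph W} {i m : ℕ}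

lemma ArrowsTo.exists_map_le_ncard_inf_le (hGH : ArrowsTo G H) (hG : G.edgeSet.Countable)
    (hF : EdgeColorable F i) :
    ∃ f : W ↪ V, H.map f ≤ G ∧ (H.map f ⊓ F).edgeSet.ncard ≤ i := by
  classical
  obtain ⟨c, hc, hci⟩ := hF
  obtain ⟨d, hd⟩ := Set.countable_iff_exists_injOn.1 hG
  have hd_rest : Set.InjOn d (G \ F).edgeSet := hd.mono (edgeSet_mono sdiff_le)
  obtain ⟨f, hf, hrainbow⟩ := hGH _ (hc.piecewise hci (isProperEdgeColoring_of_injOn hd_rest))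
  let φ : W ↪ V := ⟨f, hf⟩
  refine ⟨φ, (map_le_iff_le_comap _ _ _).2 f.le_comap, ?_⟩
  have hinj : Set.InjOn c (H.map φ ⊓ F).edgeSet := by
    rw [edgeSet_inf, edgeSet_map]
    rintro _ ⟨⟨e₁, h₁, rfl⟩, hF₁⟩ _ ⟨⟨e₂, h₂, rfl⟩, hF₂⟩ h
    simp only [Function.Embedding.sym2Map_apply] at hF₁ hF₂ h ⊢
    refine congrArg _ (hrainbow e₁ h₁ e₂ h₂ ?_)
    exact (Set.piecewise_eq_of_mem _ _ _ hF₁).trans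
      (h.trans (Set.piecewise_eq_of_mem _ _ _ hF₂).symm)
  have hmaps : ∀ e ∈ (H.map φ ⊓ F).edgeSet, c e ∈ Set.Iio i :=
    fun e he ↦ hci e (edgeSet_mono inf_le_right he)
  simpa using Set.ncard_le_ncard_of_injOn c hmaps hinj (Set.finite_Iio i)

lemma ArrowsTo.exists_edgeColorable_succ (hGH : ArrowsTo G H) (hG : G.edgeSet.Finite)
    (hH : EdgeColorable H m) (hFG : F ≤ G) (hF : EdgeColorable F i) :
    ∃ F' ≤ G, EdgeColorable F' (i + 1) ∧
      H.edgeSet.ncard + m * F.edgeSet.ncard ≤ i + m * F'.edgeSet.ncard := by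
  obtain ⟨f, hfG, hfF⟩ := hGH.exists_map_le_ncard_inf_le hG.countable hF
  have hrest : H.map f \ F ≤ G := sdiff_le.trans hfG
  obtain ⟨M, hM, hM₁, hMcard⟩ := ((hH.map f).mono sdiff_le).exists_large_matching
    (hG.subset (edgeSet_mono hrest))
  refine ⟨F ⊔ M, sup_le hFG (hM.trans hrest), hF.sup hM₁, ?_⟩
  have hcopy : (H.map f ⊓ F).edgeSet.ncard + (H.map f \ F).edgeSet.ncard = H.edgeSet.ncard := by
    rw [edgeSet_inf, edgeSet_sdiff,
      Set.ncard_inter_add_ncard_sdiff_eq_ncard _ _ (hG.subset (edgeSet_mono hfG)), edgeSet_map,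
      Set.ncard_image_of_injective _ f.sym2Map.injective]
  have hunion : (F ⊔ M).edgeSet.ncard = F.edgeSet.ncard + M.edgeSet.ncard := by
    rw [edgeSet_sup, Set.ncard_union_eq _ (hG.subset (edgeSet_mono hFG))
      (hG.subset (edgeSet_mono (hM.trans hrest)))]
    exact disjoint_edgeSet.2 (disjoint_sdiff_self_right.mono_right hM)
  rw [hunion, mul_add]
  omega

/-- This is `∑ j < i, (k - j) ≤ m * |E(F)|` for `k = |E(H)|`, with the subtraction moved. -/
lemma ArrowsTo.exists_edgeColorable_ncard_ge (hGH : ArrowsTo G H) (hG : G.edgeSet.Finite)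
    (hH : EdgeColorable H m) (i : ℕ) :
    ∃ F ≤ G, EdgeColorable F i ∧
      i * (2 * H.edgeSet.ncard + 1) ≤ i ^ 2 + 2 * m * F.edgeSet.ncard := by
  induction i with
  | zero => exact ⟨⊥, bot_le, ⟨0, by simp [IsProperEdgeColoring]⟩, by simp⟩
  | succ i ih =>
    obtain ⟨F, hFG, hF, hcard⟩ := ih
    obtain ⟨F', hF'G, hF', hstep⟩ := hGH.exists_edgeColorable_succ hG hH hFG hF
    exact ⟨F', hF'G, hF', by linarith⟩

theorem ArrowsTo.ncard_mul_succ_le (hGH : ArrowsTo G H) (hG : G.edgeSet.Finite)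
    (hH : EdgeColorable H m) :
    H.edgeSet.ncard * (H.edgeSet.ncard + 1) ≤ 2 * m * G.edgeSet.ncard := by
  obtain ⟨F, hFG, -, hcard⟩ := hGH.exists_edgeColorable_ncard_ge hG hH H.edgeSet.ncard
  have hle : 2 * m * F.edgeSet.ncard ≤ 2 * m * G.edgeSet.ncard :=
    Nat.mul_le_mul_left _ (Set.ncard_le_ncard (edgeSet_mono hFG) hG)
  linarith

end LowerBound

section RainbowClique

variable {V W : Type*} {c : Sym2 V → ℕ} {S : Finset V}

/-- The complete graph on the vertex set `S` is rainbow with respect to `c`. The diagonal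
is removed because `S.sym2` contains the loops `s(x, x)`. -/
def IsRainbowClique (c : Sym2 V → ℕ) (S : Finset V) : Prop :=
  Set.InjOn c (S.sym2 \ Sym2.diagSet : Set (Sym2 V))

lemma IsRainbowClique.insert_of_fresh [DecidableEq V] {v : V} (hS : IsRainbowClique c S)
    (hc : IsProperEdgeColoring ⊤ c) (hv : v ∉ S)
    (hfresh : ∀ x ∈ S, ∀ e ∈ S.sym2, c s(x, v) ≠ c e) : IsRainbowClique c (insert v S) := by
  have hedges : ((insert v S).sym2 \ Sym2.diagSet : Set (Sym2 V)) =
      (S.sym2 \ Sym2.diagSet : Set (Sym2 V)) ∪ (fun x ↦ s(v, x)) '' S := by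
    ext e
    induction e with | _ x y
    simp only [Set.mem_sdiff, Finset.mem_coe, Finset.mk_mem_sym2_iff,
      Finset.mem_insert, Sym2.mem_diagSet, Sym2.mk_isDiag_iff, Set.mem_union, Set.mem_image,
      Sym2.eq_iff]
    grind
  have hstar : Set.InjOn c ((fun x ↦ s(v, x)) '' S) := by
    rintro _ ⟨x, hx, rfl⟩ _ ⟨y, hy, rfl⟩ hxy
    have hne (z : V) (hz : z ∈ S) : v ≠ z := fun h ↦ hv (h ▸ hz)
    exact congrArg _ (hc.injOn_neighborSet v (hne x hx) (hne y hy) hxy)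
  have hcross : ∀ e ∈ (S.sym2 \ Sym2.diagSet : Set (Sym2 V)),
      ∀ e' ∈ (fun x ↦ s(v, x)) '' S, c e ≠ c e' := by
    rintro e he _ ⟨x, hx, rfl⟩
    simpa only [Sym2.eq_swap] using (hfresh x hx e he.1).symm
  rw [IsRainbowClique, hedges, Set.injOn_union]
  · exact ⟨hS, hstar, hcross⟩
  · exact Set.disjoint_left.2 fun e he he' ↦ hcross e he e he' rfl

lemma IsProperEdgeColoring.exists_fresh_vertex [Fintype V] (hc : IsProperEdgeColoring ⊤ c)
    (hcard : S.card + S.card * S.sym2.card < Fintype.card V) :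
    ∃ v ∉ S, ∀ x ∈ S, ∀ e ∈ S.sym2, c s(x, v) ≠ c e := by
  classical
  by_contra! hconflict
  have hle : (Sᶜ).card ≤ (S ×ˢ S.sym2).card := by
    refine Finset.card_le_card_of_forall_subsingleton (fun v p ↦ c s(p.1, v) = c p.2) ?_ ?_
    · intro v hv
      obtain ⟨x, hx, e, he, h⟩ := hconflict v (Finset.mem_compl.1 hv)
      exact ⟨(x, e), Finset.mk_mem_product hx he, h⟩
    · rintro ⟨x, e⟩ hp v ⟨hv, hve⟩ w ⟨hw, hwe⟩
      have hx : x ∈ S := (Finset.mem_product.1 hp).1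
      have hne (u : V) (hu : u ∈ Sᶜ) : x ≠ u := fun h ↦ Finset.mem_compl.1 hu (h ▸ hx)
      exact hc.injOn_neighborSet x (hne v hv) (hne w hw) (hve.trans hwe.symm)
  rw [Finset.card_compl, Finset.card_product] at hle
  omega

lemma IsProperEdgeColoring.exists_isRainbowClique [Fintype V] (hc : IsProperEdgeColoring ⊤ c)
    {s : ℕ} (hs : s ^ 3 ≤ Fintype.card V) :
    ∃ S : Finset V, S.card = s ∧ IsRainbowClique c S := by
  classical
  induction s with
  | zero => exact ⟨∅, rfl, by simp [IsRainbowClique]⟩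
  | succ s ih =>
    obtain ⟨S, rfl, hS⟩ := ih ((Nat.pow_le_pow_left s.le_succ 3).trans hs)
    have hsym2 : S.sym2.card ≤ (S.card + 1) * S.card := by
      rw [Finset.card_sym2, Nat.choose_two_right]
      exact Nat.div_le_self _ _
    obtain ⟨v, hv, hfresh⟩ := hc.exists_fresh_vertex (S := S) (by nlinarith)
    exact ⟨insert v S, Finset.card_insert_of_notMem hv, hS.insert_of_fresh hc hv hfresh⟩

lemma IsRainbowClique.hasRainbowCopy (hS : IsRainbowClique c S) (H : SimpleGraph W) (f : W ↪ V)
    (hf : ∀ w, f w ∈ S) : HasRainbowCopy ⊤ H c := by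
  have hedge : ∀ e ∈ H.edgeSet, e.map f ∈ (S.sym2 \ Sym2.diagSet : Set (Sym2 V)) := by
    intro e he
    induction e with | _ x y
    simpa [hf] using H.ne_of_adj he
  exact ⟨⟨f, fun h ↦ f.injective.ne h.ne⟩, f.injective, fun e₁ h₁ e₂ h₂ h ↦
    Sym2.map.injective f.injective (hS (hedge e₁ h₁) (hedge e₂ h₂) h)⟩

theorem arrowsTo_top_of_card_pow_three_le [Fintype V] [Fintype W] (H : SimpleGraph W)
    (hcard : Fintype.card W ^ 3 ≤ Fintype.card V) : ArrowsTo (⊤ : SimpleGraph V) H := by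
  intro c hc
  obtain ⟨S, hS, hrainbow⟩ := hc.exists_isRainbowClique hcard
  let e : W ≃ S := Fintype.equivOfCardEq (by simp [hS])
  exact hrainbow.hasRainbowCopy H (e.toEmbedding.trans (Function.Embedding.subtype _))
    fun w ↦ (e w).2

lemma exists_arrowsTo_ncard_eq_ARs [Finite W] (H : SimpleGraph W) :
    ∃ (n : ℕ) (G : SimpleGraph (Fin n)), ArrowsTo G H ∧ G.edgeSet.ncard = ARs H := by
  have := Fintype.ofFinite W
  have hexists : ∃ m n, ∃ G : SimpleGraph (Fin n), ArrowsTo G H ∧ G.edgeSet.ncard = m :=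
    ⟨_, Fintype.card W ^ 3, ⊤, arrowsTo_top_of_card_pow_three_le H (by simp), rfl⟩
  exact Nat.sInf_mem hexists

end RainbowClique

theorem stmt_7_general {W : Type*} [Finite W] (H : SimpleGraph W) :
    H.edgeSet.ncard * (H.edgeSet.ncard + 1) ≤ 2 * chromIndex H * ARs H := by
  obtain ⟨n, G, hGH, hG⟩ := exists_arrowsTo_ncard_eq_ARs H
  rw [← hG]
  exact hGH.ncard_mul_succ_le G.edgeSet.toFinite (edgeColorable_chromIndex H.edgeSet.toFinite)

theorem stmt_7 {W : Type} [Fintype W] (H : SimpleGraph W) [DecidableRel H.Adj]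
    (hk : 1 ≤ H.edgeSet.ncard)
    (hchi : chromIndex H = H.maxDegree) :
    (H.edgeSet.ncard : ℝ) * (H.edgeSet.ncard + 1) / (2 * (H.maxDegree : ℝ))
      ≤ (ARs H : ℝ) := by
  refine div_le_of_le_mul₀ (by positivity) (by positivity) ?_
  exact_mod_cast (hchi ▸ stmt_7_general H).trans_eq (mul_comm _ _)
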